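/- arXiv:1408.2137 — 2 statements merged into one kernel-verified Lean document; each statement's English description precedes it below -/
import Mathlib

section
/- Let X be a meager separable metrizable space that is countable dense homogeneous. Then X is a λ-set, i.e., every countable subset of X is a Gδ subset of X. -/
/-- A space is countable dense homogeneous (CDH) if for every pair of countable
dense subsets `A`, `B` there is a homeomorphism of the space onto itself
mapping `A` onto `B`. -/
def IsCDH (X : Type*) [TopologicalSpace X] : Prop :=
  ∀ A B : Set X, A.Countable → Dense A → B.Countable → Dense B →
    ∃ h : X ≃ₜ X, h '' A = B

/-!
Some countable dense set `A` is Gδ: if the dense open sets `G 0 ⊇ G 1 ⊇ ⋯` have empty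
intersection, approximate the `i`-th point of a dense sequence by points `x i k ∈ G (i + k)`, so
that each `G n` contains all but finitely many points of `A = {x i k}`, and `A` is the
intersection of the Gδ sets `G n ∪ (A \ G n)`. For a countable set `D`, a homeomorphism taking
`A ∪ D` to `A` shows that `A ∪ D` is Gδ, and removing the countable set `A \ D` leaves `D`.
-/

open Set Filter Topology TopologicalSpace

section

variable {X : Type*} [TopologicalSpace X]

theorem isOpen_dissipate {ι : Type*} [Preorder ι] [LocallyFiniteOrderBot ι] {U : ι → Set X}
    (hU : ∀ i, IsOpen (U i)) (i : ι) : IsOpen (dissipate U i) :=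
  (finite_Iic i).isOpen_biInter fun j _ ↦ hU j

theorem dense_dissipate {ι : Type*} [Preorder ι] [LocallyFiniteOrderBot ι] {U : ι → Set X}
    (hUo : ∀ i, IsOpen (U i)) (hUd : ∀ i, Dense (U i)) (i : ι) : Dense (dissipate U i) := by
  have hsInter : dissipate U i = ⋂₀ (U '' Iic i) := (sInter_image U (Iic i)).symm
  rw [hsInter]
  exact ((finite_Iic i).image U).dense_sInter (forall_mem_image.2 fun j _ ↦ hUo j)
    (forall_mem_image.2 fun j _ ↦ hUd j)

theorem exists_antitone_isOpen_dense_of_mem_residual {s : Set X} (hs : s ∈ residual X) :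
    ∃ G : ℕ → Set X, Antitone G ∧ (∀ n, IsOpen (G n)) ∧ (∀ n, Dense (G n)) ∧ ⋂ n, G n ⊆ s := by
  obtain ⟨S, hSo, hSd, hSc, hSs⟩ := mem_residual_iff.1 hs
  -- Adjoining `univ` makes the family nonempty, hence enumerable by `ℕ`.
  obtain ⟨U, hU⟩ := (hSc.insert univ).exists_eq_range (insert_nonempty univ S)
  have hUo : ∀ n, IsOpen (U n) :=
    forall_mem_range.1 <| hU ▸ forall_mem_insert.2 ⟨isOpen_univ, hSo⟩
  have hUd : ∀ n, Dense (U n) :=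
    forall_mem_range.1 <| hU ▸ forall_mem_insert.2 ⟨dense_univ, hSd⟩
  refine ⟨dissipate U, antitone_dissipate, isOpen_dissipate hUo, dense_dissipate hUo hUd, ?_⟩
  rwa [iInter_dissipate, ← sInter_range, ← hU, sInter_insert, univ_inter]

theorem exists_seq_tendsto_of_forall_dense {G : ℕ → Set X} (hG : ∀ n, Dense (G n)) (x : X)
    [(𝓝 x).IsCountablyGenerated] :
    ∃ u : ℕ → X, (∀ n, u n ∈ G n) ∧ Tendsto u atTop (𝓝 x) := by
  obtain ⟨V, hV⟩ := (𝓝 x).exists_antitone_basis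
  choose u hu using fun n ↦ (hG n).inter_nhds_nonempty (hV.mem n)
  exact ⟨u, fun n ↦ (hu n).1, hV.tendsto fun n ↦ (hu n).2⟩

theorem exists_countable_dense_finite_sdiff [SeparableSpace X] [FirstCountableTopology X]
    {G : ℕ → Set X} (hanti : Antitone G) (hG : ∀ n, Dense (G n)) :
    ∃ A : Set X, A.Countable ∧ Dense A ∧ ∀ n, (A \ G n).Finite := by
  rcases isEmpty_or_nonempty X with _ | _
  · exact ⟨∅, countable_empty, isEmptyElim, fun n ↦ toFinite _⟩
  choose x hxG hx using fun i ↦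
    exists_seq_tendsto_of_forall_dense (fun k ↦ hG (i + k)) (denseSeq X i)
  refine ⟨range fun p : ℕ × ℕ ↦ x p.1 p.2, countable_range _, ?_, fun n ↦ ?_⟩
  · have hclosure : range (denseSeq X) ⊆ closure (range fun p : ℕ × ℕ ↦ x p.1 p.2) :=
      range_subset_iff.2 fun i ↦
        mem_closure_of_tendsto (hx i) (.of_forall fun k ↦ mem_range_self (i, k))
    exact ((denseRange_denseSeq X).mono hclosure).of_closure
  · refine (((finite_Iio n).prod (finite_Iio n)).image fun p ↦ x p.1 p.2).subset ?_
    rintro _ ⟨⟨⟨i, k⟩, rfl⟩, hnot⟩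
    have hik : i + k < n := lt_of_not_ge fun hle ↦ hnot (hanti hle (hxG i k))
    exact mem_image_of_mem _ ⟨show i < n by lia, show k < n by lia⟩

theorem isGδ_of_iInter_subset_of_isGδ_sdiff {ι : Sort*} [Countable ι] {A : Set X} {G : ι → Set X}
    (hG : ∀ i, IsGδ (G i)) (hGA : ⋂ i, G i ⊆ A) (hsdiff : ∀ i, IsGδ (A \ G i)) : IsGδ A := by
  have hA : A = ⋂ i, (G i ∪ A \ G i) := by
    simp only [union_sdiff_self, ← iInter_union, union_eq_self_of_subset_left hGA]
  rw [hA]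
  exact .iInter fun i ↦ (hG i).union (hsdiff i)

theorem exists_countable_dense_isGδ_of_isMeagre_univ [T1Space X] [SeparableSpace X]
    [FirstCountableTopology X] (hm : IsMeagre (univ : Set X)) :
    ∃ A : Set X, A.Countable ∧ Dense A ∧ IsGδ A := by
  obtain ⟨G, hanti, hGo, hGd, hinter⟩ := exists_antitone_isOpen_dense_of_mem_residual hm
  rw [compl_univ] at hinter
  obtain ⟨A, hAc, hAd, hfin⟩ := exists_countable_dense_finite_sdiff hanti hGd
  exact ⟨A, hAc, hAd, isGδ_of_iInter_subset_of_isGδ_sdiff (fun n ↦ (hGo n).isGδ)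
    (hinter.trans (empty_subset A)) fun n ↦ (hfin n).isGδ⟩

theorem isGδ_of_subset_of_countable_sdiff [T1Space X] {s t : Set X} (ht : IsGδ t) (hst : s ⊆ t)
    (hc : (t \ s).Countable) : IsGδ s := by
  rw [← sdiff_sdiff_cancel_left hst, sdiff_eq]
  exact ht.inter hc.isGδ_compl

theorem IsCDH.isGδ_of_countable_dense (hcdh : IsCDH X) {A B : Set X} (hAc : A.Countable)
    (hAd : Dense A) (hA : IsGδ A) (hBc : B.Countable) (hBd : Dense B) : IsGδ B := by
  obtain ⟨h, rfl⟩ := hcdh B A hBc hBd hAc hAd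
  simpa only [h.preimage_image] using hA.preimage h.continuous

theorem statement4_general [T1Space X] [SeparableSpace X] [FirstCountableTopology X]
    (hm : IsMeagre (univ : Set X)) (hcdh : IsCDH X) (D : Set X) (hD : D.Countable) : IsGδ D := by
  obtain ⟨A, hAc, hAd, hA⟩ := exists_countable_dense_isGδ_of_isMeagre_univ hm
  have hAD : IsGδ (A ∪ D) :=
    hcdh.isGδ_of_countable_dense hAc hAd hA (hAc.union hD) (hAd.mono subset_union_left)
  refine isGδ_of_subset_of_countable_sdiff hAD subset_union_right (hAc.mono ?_)
  rw [union_sdiff_right]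
  exact sdiff_subset

end

/-- Every meager countable dense homogeneous separable metrizable space is a
λ-set: every countable subset is Gδ. -/
theorem statement4 {X : Type*} [TopologicalSpace X] [TopologicalSpace.SeparableSpace X]
    [TopologicalSpace.MetrizableSpace X] (hm : IsMeagre (Set.univ : Set X)) (hcdh : IsCDH X) :
    ∀ D : Set X, D.Countable → IsGδ D :=
  statement4_general hm hcdh
end

section
/- Let X be a separable metrizable space such that the countable power X^ω is countable dense homogeneous. Then X is a Baire space. -/
/-!
If `X` is not Baire, some nonempty open `U ⊆ X` is meagre. Every open box of the power restricts
only finitely many coordinates, so the points having some coordinate in `U` form a dense open set;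
that set is also meagre, so the whole power is meagre in itself. Hence there are countably many
dense open sets `W i` with empty intersection. Choosing one point in each basic open set, each point
also in more and more of the `W i`, gives a countable dense `D` with every `D \ W i` finite; such a
`D` is the intersection of the Gδ sets `W i ∪ D \ W i`. By CDH every countable dense set is then
Gδ, in particular one containing a countable dense subset of a copy of the Cantor set; its trace on
the Cantor set contradicts Baire's theorem.
-/

open Set Topology TopologicalSpace

section MeagreSets

variable {X : Type*} [TopologicalSpace X]

theorem baireSpace_of_forall_isOpen_not_isMeagre
    (h : ∀ U : Set X, IsOpen U → U.Nonempty → ¬ IsMeagre U) : BaireSpace X where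
  baire_property f hfo hfd := by
    have hres : ⋂ n, f n ∈ residual X :=
      countable_iInter_mem.2 fun n => residual_of_dense_open (hfo n) (hfd n)
    rw [← compl_compl (⋂ n, f n), ← interior_eq_empty_iff_dense_compl, ← not_nonempty_iff_eq_empty]
    refine fun hne => h _ isOpen_interior hne (IsMeagre.mono interior_subset ?_)
    rwa [IsMeagre, compl_compl]

theorem isMeagre_of_countable [T1Space X] [PerfectSpace X] {s : Set X} (hs : s.Countable) :
    IsMeagre s := by
  rw [← biUnion_of_singleton s]
  refine isMeagre_biUnion hs fun x _ => IsNowhereDense.isMeagre ?_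
  rw [isClosed_singleton.isNowhereDense_iff, interior_singleton]

theorem not_isGδ_of_countable_of_dense [T1Space X] [PerfectSpace X] [BaireSpace X] [Nonempty X]
    {s : Set X} (hsc : s.Countable) (hsd : Dense s) : ¬ IsGδ s :=
  fun hs => not_isMeagre_of_isGδ_of_dense hs hsd (isMeagre_of_countable hsc)

theorem isGδ_of_finite_sdiff [T1Space X] [FirstCountableTopology X] {ι : Type*} [Countable ι]
    {W : ι → Set X} {D : Set X} (hWo : ∀ i, IsOpen (W i)) (hW : ⋂ i, W i = ∅)
    (hD : ∀ i, (D \ W i).Finite) : IsGδ D := by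
  have hD_eq : D = ⋂ i, (W i ∪ D \ W i) :=
    calc D = (⋂ i, W i) ∪ D := by rw [hW, empty_union]
      _ = ⋂ i, (W i ∪ D) := iInter_union W D
      _ = ⋂ i, (W i ∪ D \ W i) := by simp only [union_sdiff_self]
  rw [hD_eq]
  exact .iInter fun i => (hWo i).isGδ.union (hD i).isGδ

theorem exists_countable_dense_finite_sdiff_s5 [SecondCountableTopology X] {ι : Type*} [Countable ι]
    {W : ι → Set X} (hWo : ∀ i, IsOpen (W i)) (hWd : ∀ i, Dense (W i)) :
    ∃ D : Set X, D.Countable ∧ Dense D ∧ ∀ i, (D \ W i).Finite := by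
  obtain ⟨e, he⟩ := exists_injective_nat ι
  have := (countable_countableBasis X).to_subtype
  obtain ⟨c, hc⟩ := exists_injective_nat (countableBasis X)
  have hmeet (b : countableBasis X) : ((b : Set X) ∩ ⋂₀ (W '' (e ⁻¹' Iic (c b)))).Nonempty := by
    have hfin : (W '' (e ⁻¹' Iic (c b))).Finite :=
      ((finite_Iic (c b)).preimage he.injOn).image W
    have hdense := hfin.dense_sInter (forall_mem_image.2 fun i _ => hWo i)
      (forall_mem_image.2 fun i _ => hWd i)
    exact hdense.inter_open_nonempty b (isOpen_of_mem_countableBasis b.2)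
      (nonempty_of_mem_countableBasis b.2)
  choose d hdb hdW using hmeet
  refine ⟨range d, countable_range d, ?_, fun i => ?_⟩
  · exact (isBasis_countableBasis X).dense_iff.2 fun b hb _ =>
      ⟨d ⟨b, hb⟩, hdb ⟨b, hb⟩, mem_range_self _⟩
  · have hlate : ∀ b, e i ≤ c b → d b ∈ W i := fun b hib =>
      hdW b (W i) (mem_image_of_mem W hib)
    refine (((finite_Iio (e i)).preimage hc.injOn).image d).subset ?_
    rintro _ ⟨⟨b, rfl⟩, hb⟩
    exact mem_image_of_mem d (not_le.1 fun hib => hb (hlate b hib))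

theorem exists_countable_dense_isGδ_of_isMeagre_univ_s5 [T1Space X] [SecondCountableTopology X]
    (h : IsMeagre (univ : Set X)) : ∃ D : Set X, D.Countable ∧ Dense D ∧ IsGδ D := by
  obtain ⟨S, hSo, hSd, hSc, hS⟩ := mem_residual_iff.1 h
  have := hSc.to_subtype
  obtain ⟨D, hDc, hDd, hD⟩ := exists_countable_dense_finite_sdiff_s5
    (W := ((↑) : S → Set X)) (fun s => hSo s s.2) (fun s => hSd s s.2)
  refine ⟨D, hDc, hDd, isGδ_of_finite_sdiff (fun s : S => hSo s s.2) ?_ hD⟩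
  rwa [← sInter_eq_iInter, ← subset_empty_iff, ← compl_univ]

end MeagreSets

section InfiniteProducts

variable {ι : Type*} [Infinite ι] {X : ι → Type*} [∀ i, TopologicalSpace (X i)]

theorem dense_iUnion_eval_preimage {U : ∀ i, Set (X i)} (hU : ∀ i, (U i).Nonempty) :
    Dense (⋃ i, Function.eval i ⁻¹' U i) := by
  classical
  choose u hu using hU
  refine fun x => mem_closure_iff_nhds.2 fun t ht => ?_
  obtain ⟨I, hI⟩ := exists_finset_piecewise_mem_of_mem_nhds ht u
  obtain ⟨i, hi⟩ := Infinite.exists_notMem_finset I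
  refine ⟨I.piecewise x u, hI, mem_iUnion.2 ⟨i, ?_⟩⟩
  simpa only [mem_preimage, Function.eval, Finset.piecewise_eq_of_notMem _ _ _ hi] using hu i

theorem perfectSpace_pi [∀ i, Nontrivial (X i)] : PerfectSpace (∀ i, X i) := by
  refine perfectSpace_iff_forall_not_isolated.2 fun x => mem_closure_iff_nhdsWithin_neBot.1 ?_
  have hdense : Dense (⋃ i, Function.eval i ⁻¹' ({x i}ᶜ : Set (X i))) :=
    dense_iUnion_eval_preimage fun i => exists_ne (x i)
  refine hdense.mono (iUnion_subset fun i y hy hyx => ?_) x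
  exact hy (congrFun hyx i)

theorem isMeagre_univ_pi [Countable ι] {U : ∀ i, Set (X i)} (hUo : ∀ i, IsOpen (U i))
    (hUne : ∀ i, (U i).Nonempty) (hUm : ∀ i, IsMeagre (U i)) :
    IsMeagre (univ : Set (∀ i, X i)) := by
  have hmeagre : IsMeagre (⋃ i, Function.eval i ⁻¹' U i) := isMeagre_iUnion fun i =>
    (hUm i).preimage_of_isOpenMap (continuous_apply i) (isOpenMap_eval i)
  have hres : ⋃ i, Function.eval i ⁻¹' U i ∈ residual (∀ i, X i) :=
    residual_of_dense_open (isOpen_iUnion fun i => (hUo i).preimage (continuous_apply i))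
      (dense_iUnion_eval_preimage hUne)
  rw [← union_compl_self (⋃ i, Function.eval i ⁻¹' U i)]
  exact hmeagre.union (by rwa [IsMeagre, compl_compl])

end InfiniteProducts

namespace IsCDH

variable {X : Type*} [TopologicalSpace X]

theorem isGδ_of_isGδ (h : IsCDH X) {D E : Set X} (hDc : D.Countable) (hDd : Dense D)
    (hD : IsGδ D) (hEc : E.Countable) (hEd : Dense E) : IsGδ E := by
  obtain ⟨φ, rfl⟩ := h D E hDc hDd hEc hEd
  rw [φ.image_eq_preimage_symm]
  exact hD.preimage φ.symm.continuous

theorem not_isMeagre_univ_of_continuous_of_injective [T1Space X] [SecondCountableTopology X]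
    (h : IsCDH X) {C : Type*} [TopologicalSpace C] [PerfectSpace C] [BaireSpace C]
    [SeparableSpace C] [Nonempty C] {g : C → X} (hg : Continuous g)
    (hgi : Function.Injective g) : ¬ IsMeagre (univ : Set X) := by
  intro hX
  have := t1Space_of_injective_of_continuous hgi hg
  obtain ⟨D, hDc, hDd, hD⟩ := exists_countable_dense_isGδ_of_isMeagre_univ_s5 hX
  obtain ⟨Q, hQc, hQd⟩ := exists_countable_dense C
  have hEc : (D ∪ g '' Q).Countable := hDc.union (hQc.image g)
  have hE : IsGδ (D ∪ g '' Q) :=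
    h.isGδ_of_isGδ hDc hDd hD hEc (hDd.mono subset_union_left)
  have hQE : Q ⊆ g ⁻¹' (D ∪ g '' Q) := image_subset_iff.1 subset_union_right
  exact not_isGδ_of_countable_of_dense (hEc.preimage hgi) (hQd.mono hQE) (hE.preimage hg)

theorem not_isMeagre_univ_pi {ι : Type*} [Countable ι] [Infinite ι] [Nontrivial X] [T1Space X]
    [SecondCountableTopology X] (h : IsCDH (ι → X)) : ¬ IsMeagre (univ : Set (ι → X)) := by
  obtain ⟨a, b, hab⟩ := exists_pair_ne X
  let g : Bool → X := fun t => cond t a b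
  have hg : Function.Injective g := Bool.injective_iff.2 hab.symm
  have : PerfectSpace (ι → Bool) := perfectSpace_pi
  exact h.not_isMeagre_univ_of_continuous_of_injective (g := (g ∘ · : (ι → Bool) → ι → X))
    (continuous_pi fun i => continuous_of_discreteTopology.comp (continuous_apply i)) hg.comp_left

end IsCDH

theorem statement5_general {ι X : Type*} [Countable ι] [Infinite ι] [TopologicalSpace X]
    [T1Space X] [SecondCountableTopology X] (h : IsCDH (ι → X)) : BaireSpace X := by
  rcases subsingleton_or_nontrivial X with _ | _
  · exact baire_of_finite
  · exact baireSpace_of_forall_isOpen_not_isMeagre fun U hUo hUne hUm =>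
      h.not_isMeagre_univ_pi (isMeagre_univ_pi (fun _ => hUo) (fun _ => hUne) fun _ => hUm)

/-- If `X` is a separable metrizable space whose countable power `X^ω` is
countable dense homogeneous, then `X` is a Baire space. -/
theorem statement5 {X : Type*} [TopologicalSpace X] [TopologicalSpace.SeparableSpace X]
    [TopologicalSpace.MetrizableSpace X] (h : IsCDH (ℕ → X)) : BaireSpace X := by
  have : SecondCountableTopology X :=
    let := metrizableSpaceMetric X
    UniformSpace.secondCountable_of_separable X
  exact statement5_general h
end
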